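/- Fix positive integers c and n, positive integers x₁,…,xₙ with d = x₁+⋯+xₙ, and equip the rectangle Δ of width c and height d with boundary data μ₁ = (c), μ₂ = (1,…,1) (c parts equal to 1), ν₁ = (x₁,…,xₙ), ν₂ = (d). Assume the genericity condition Σ_{i∈I} xᵢ ≠ Σ_{j∈J} xⱼ for all pairs of distinct subsets I, J ⊆ {1,…,n}. If γ is a λ-increasing lattice path from (0,d) to (c,0) in Δ with n+c+1 steps and mult(γ) ≠ 0, then: (1) the last step of γ is the full right edge, from (c,d) to (c,0); (2) the first step of γ with positive horizontal displacement is an up-right step, i.e. of the form (1,s) with s > 0; (3) D(γ) = {(0,−x₁),…,(0,−xₙ),(0,−d)} as multisets; (4) the multiset of up-right steps of γ is {(1, x_{I₁}),…,(1, x_{I_ℓ})} for some pairwise disjoint nonempty subsets I₁,…,I_ℓ with union {1,…,n}, and for each a the down steps (0,−xᵢ) with i ∈ I_a occur earlier in γ than the step (1, x_{I_a}); (5) every remaining step of γ equals (1,0). Here x_I denotes Σ_{i∈I} xᵢ. -/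

import Mathlib

open Classical

noncomputable section

namespace TropPaths

/-- Lattice points of the plane. -/
abbrev Pt := ℤ × ℤ

/-- The order on `ℤ²` induced by `λ(x,y) = x - εy` for a small irrational `ε > 0`:
`p ≺ q` iff `p₁ < q₁`, or (`p₁ = q₁` and `p₂ > q₂`). -/
def lamLT (p q : Pt) : Prop := p.1 < q.1 ∨ (p.1 = q.1 ∧ q.2 < p.2)

/-- A lattice path, recorded as the list of its points, is `λ`-increasing. -/
def Increasing (γ : List Pt) : Prop := List.Chain' lamLT γ

/-- The determinant of two vectors in `ℤ²`. -/
def det (u v : Pt) : ℤ := u.1 * v.2 - u.2 * v.1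

/-- The `k`-th point of a path (junk value out of range). -/
def pt (γ : List Pt) (k : ℕ) : Pt := γ.getD k (0, 0)

/-- The `k`-th step vector of a path. -/
def stepAt (γ : List Pt) (k : ℕ) : Pt := pt γ (k + 1) - pt γ k

/-- The list of all step vectors of a path. -/
def steps (γ : List Pt) : List Pt := List.zipWith (fun a b => b - a) γ γ.tail

/-- The multiset of down steps `(0,-s)`, `s > 0`, of a path. -/
def downSteps (γ : List Pt) : Multiset Pt :=
  Multiset.filter (fun v => v.1 = 0 ∧ v.2 < 0) (steps γ : Multiset Pt)

/-- The multiset of up-right steps of a path. -/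
def upRightSteps (γ : List Pt) : Multiset Pt :=
  Multiset.filter (fun v => 0 < v.1 ∧ 0 < v.2) (steps γ : Multiset Pt)

/-- The path makes a turn of sign `s` at the (interior) index `k`; for left turns
`s = (0 < ·)`, for right turns `s = (· < 0)`. -/
def TurnAt (s : ℤ → Prop) (γ : List Pt) (k : ℕ) : Prop :=
  0 < k ∧ k + 1 < γ.length ∧ s (det (pt γ k - pt γ (k - 1)) (pt γ (k + 1) - pt γ k))

/-- `k` is the first turn of sign `s` of the path. -/
def FirstTurn (s : ℤ → Prop) (γ : List Pt) (k : ℕ) : Prop :=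
  TurnAt s γ k ∧ ∀ j, TurnAt s γ j → k ≤ j

/-- Twice the area of the triangle with vertices `γ(k-1), γ(k), γ(k+1)`. -/
def triArea2 (γ : List Pt) (k : ℕ) : ℕ :=
  (det (pt γ k - pt γ (k - 1)) (pt γ (k + 1) - pt γ k)).natAbs

/-- The path obtained by cutting the corner at index `k`, i.e. deleting the point `γ(k)`. -/
def cut (γ : List Pt) (k : ℕ) : List Pt := γ.eraseIdx k

/-- The path obtained by completing the parallelogram at index `k`, i.e. replacing
`γ(k)` by `γ(k-1) + γ(k+1) - γ(k)`. -/
def push (γ : List Pt) (k : ℕ) : List Pt :=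
  γ.set k (pt γ (k - 1) + pt γ (k + 1) - pt γ k)

/-- All points of the path lie in `Δ`. -/
def Inside (Δ : Set Pt) (γ : List Pt) : Prop := ∀ z ∈ γ, z ∈ Δ

/-- Mikhalkin's multiplicity recursion, as a functional relation: `MultRel Δ Init s γ m`
means that the recursion (performed always at the *first* turn of sign `s`) assigns the
multiplicity `m` to the path `γ`.  Here `Δ` is the set of lattice points of the polygon,
`Init` the set of initial paths (of multiplicity `1`), and `s` the turn sign
(`0 < ·` for left turns / `mult₊`, `· < 0` for right turns / `mult₋`). -/
inductive MultRel (Δ : Set Pt) (Init : List Pt → Prop) (s : ℤ → Prop) : List Pt → ℕ → Prop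
  | init {γ : List Pt} : Init γ → MultRel Δ Init s γ 1
  | noTurn {γ : List Pt} : ¬Init γ → (∀ k, ¬TurnAt s γ k) → MultRel Δ Init s γ 0
  | stepIn {γ : List Pt} {k m' m'' : ℕ} : ¬Init γ → FirstTurn s γ k →
      Inside Δ (push γ k) → MultRel Δ Init s (cut γ k) m' →
      MultRel Δ Init s (push γ k) m'' →
      MultRel Δ Init s γ (triArea2 γ k * m' + m'')
  | stepOut {γ : List Pt} {k m' : ℕ} : ¬Init γ → FirstTurn s γ k →
      ¬Inside Δ (push γ k) → MultRel Δ Init s (cut γ k) m' →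
      MultRel Δ Init s γ (triArea2 γ k * m')

/-- The multiplicity function determined by Mikhalkin's recursion. -/
def multOf (Δ : Set Pt) (Init : List Pt → Prop) (s : ℤ → Prop) (γ : List Pt) : ℕ :=
  if h : ∃ m, MultRel Δ Init s γ m then h.choose else 0

/-- `γ ≺ δ`: the path `δ` is obtained from `γ` by finitely many steps of the multiplicity
recursion (each step cuts the corner at the first turn of sign `s`, or completes the
parallelogram there). -/
inductive Reaches (Δ : Set Pt) (Init : List Pt → Prop) (s : ℤ → Prop) : List Pt → List Pt → Prop
  | refl (γ : List Pt) : Reaches Δ Init s γ γ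
  | cutStep {γ δ : List Pt} {k : ℕ} : ¬Init γ → FirstTurn s γ k →
      Reaches Δ Init s (cut γ k) δ → Reaches Δ Init s γ δ
  | pushStep {γ δ : List Pt} {k : ℕ} : ¬Init γ → FirstTurn s γ k →
      Inside Δ (push γ k) → Reaches Δ Init s (push γ k) δ → Reaches Δ Init s γ δ

/-- The lattice path starting at `p` with the given list of step vectors. -/
def pathFrom : Pt → List Pt → List Pt
  | p, [] => [p]
  | p, v :: vs => p :: pathFrom (p + v) vs

/-- Horizontal (rightward) steps of the given sizes. -/
def hSteps (l : List ℕ) : List Pt := l.map fun k => ((k : ℤ), 0)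

/-- Vertical downward steps of the given sizes. -/
def dSteps (l : List ℕ) : List Pt := l.map fun k => ((0 : ℤ), -(k : ℤ))

/-- A multiset of positive integers is a partition of `t`. -/
def IsPartition (m : Multiset ℕ) (t : ℕ) : Prop := (∀ k ∈ m, 0 < k) ∧ m.sum = t

/-! ## The rectangle `[0,c] × [0,d]` -/

/-- The lattice points of the rectangle with vertices `(0,0), (c,0), (0,d), (c,d)`. -/
def rect (c d : ℕ) : Set Pt := {z | 0 ≤ z.1 ∧ z.1 ≤ (c : ℤ) ∧ 0 ≤ z.2 ∧ z.2 ≤ (d : ℤ)}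

/-- `β₊`-initial paths of the rectangle: from `p = (0,d)` clockwise along the top edge with
step sizes the parts of `μ₂` and then down the right edge with step sizes the parts of `ν₂`. -/
def InitPlusRect (d : ℕ) (μ₂ ν₂ : Multiset ℕ) (γ : List Pt) : Prop :=
  ∃ s t : List ℕ, (s : Multiset ℕ) = μ₂ ∧ (t : Multiset ℕ) = ν₂ ∧
    γ = pathFrom (0, (d : ℤ)) (hSteps s ++ dSteps t)

/-- `β₋`-initial paths of the rectangle: from `p = (0,d)` counterclockwise down the left edge
with step sizes the parts of `ν₁` and then along the bottom edge with step sizes the parts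
of `μ₁`. -/
def InitMinusRect (d : ℕ) (μ₁ ν₁ : Multiset ℕ) (γ : List Pt) : Prop :=
  ∃ s t : List ℕ, (s : Multiset ℕ) = ν₁ ∧ (t : Multiset ℕ) = μ₁ ∧
    γ = pathFrom (0, (d : ℤ)) (dSteps s ++ hSteps t)

/-- `mult₊` for the rectangle with boundary data `(μ₁, μ₂, ν₁, ν₂)`. -/
def multPlusRect (c d : ℕ) (μ₂ ν₂ : Multiset ℕ) : List Pt → ℕ :=
  multOf (rect c d) (InitPlusRect d μ₂ ν₂) (fun x => 0 < x)

/-- `mult₋` for the rectangle with boundary data `(μ₁, μ₂, ν₁, ν₂)`. -/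
def multMinusRect (c d : ℕ) (μ₁ ν₁ : Multiset ℕ) : List Pt → ℕ :=
  multOf (rect c d) (InitMinusRect d μ₁ ν₁) (fun x => x < 0)

/-- `mult = mult₊ · mult₋` for the rectangle with boundary data `(μ₁, μ₂, ν₁, ν₂)`. -/
def multRect (c d : ℕ) (μ₁ μ₂ ν₁ ν₂ : Multiset ℕ) (γ : List Pt) : ℕ :=
  multPlusRect c d μ₂ ν₂ γ * multMinusRect c d μ₁ ν₁ γ

/-- A `λ`-increasing lattice path from `(0,d)` to `(c,0)` contained in the rectangle. -/
def IsPathRect (c d : ℕ) (γ : List Pt) : Prop :=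
  Increasing γ ∧ γ.head? = some (0, (d : ℤ)) ∧ γ.getLast? = some ((c : ℤ), 0) ∧
    Inside (rect c d) γ

/-- The genericity condition: all subset sums of the `xᵢ` are distinct. -/
def Generic {n : ℕ} (x : Fin n → ℕ) : Prop :=
  ∀ I J : Finset (Fin n), I ≠ J → ∑ i ∈ I, x i ≠ ∑ j ∈ J, x j



theorem pathFrom_ne_nil (p : Pt) (w : List Pt) : pathFrom p w ≠ [] := by
  cases w <;> simp [pathFrom]

theorem pathFrom_length (p : Pt) (w : List Pt) : (pathFrom p w).length = w.length + 1 := by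
  induction w generalizing p with
  | nil => simp [pathFrom]
  | cons a w ih => simp [pathFrom, ih]

theorem pathFrom_inj (p : Pt) (w w' : List Pt) (h : pathFrom p w = pathFrom p w') : w = w' := by
  induction w generalizing p w' with
  | nil =>
    cases w' with
    | nil => rfl
    | cons b w' =>
      have := congrArg List.length h
      simp [pathFrom, pathFrom_length] at this
  | cons a w ih =>
    cases w' with
    | nil =>
      have := congrArg List.length h
      simp [pathFrom, pathFrom_length] at this
    | cons b w' =>
      simp only [pathFrom, List.cons.injEq, true_and] at h
      have hab : a = b := by
        have h2 := congrArg List.head? h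
        cases w <;> cases w' <;> simpa [pathFrom] using h2
      subst hab
      rw [ih _ _ h]

theorem steps_pathFrom (p : Pt) (w : List Pt) : steps (pathFrom p w) = w := by
  induction w generalizing p with
  | nil => simp [pathFrom, steps]
  | cons a w ih =>
    have := ih (p + a)
    cases w with
    | nil => simp [pathFrom, steps]
    | cons b w =>
      simp only [pathFrom, steps, List.tail_cons, List.zipWith_cons_cons] at this ⊢
      rw [this]; simp

theorem exists_pathFrom (γ : List Pt) (p : Pt) (h : γ.head? = some p) :
    ∃ w, γ = pathFrom p w := by
  induction γ generalizing p with
  | nil => simp at h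
  | cons a γ ih =>
    simp at h
    subst h
    cases γ with
    | nil => exact ⟨[], rfl⟩
    | cons b γ =>
      obtain ⟨w, hw⟩ := ih b rfl
      refine ⟨(b - a) :: w, ?_⟩
      simp [pathFrom, hw]

theorem pt_pathFrom (p : Pt) (A B : List Pt) :
    pt (pathFrom p (A ++ B)) A.length = p + A.sum := by
  induction A generalizing p with
  | nil => cases B <;> simp [pathFrom, pt]
  | cons a A ih =>
    have := ih (p + a)
    simp only [pt, pathFrom, List.cons_append, List.length_cons, List.getD_cons_succ,
      List.sum_cons] at this ⊢
    rw [this, add_assoc]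

theorem stepAt_pathFrom (p : Pt) (A B : List Pt) (u : Pt) :
    stepAt (pathFrom p (A ++ u :: B)) A.length = u := by
  have h1 := pt_pathFrom p A (u :: B)
  have h2 := pt_pathFrom p (A ++ [u]) B
  simp only [List.append_assoc, List.length_append, List.length_singleton, List.sum_append,
    List.sum_singleton, List.cons_append, List.nil_append] at h2
  simp [stepAt, h1, h2]

theorem cut_pathFrom (p : Pt) (A B : List Pt) (u v : Pt) :
    cut (pathFrom p (A ++ u :: v :: B)) (A.length + 1) = pathFrom p (A ++ (u + v) :: B) := by
  induction A generalizing p with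
  | nil => cases B <;> simp [pathFrom, cut, add_assoc]
  | cons a A ih =>
    have := ih (p + a)
    simp only [cut, pathFrom, List.cons_append, List.length_cons, List.eraseIdx_cons_succ] at this ⊢
    rw [this]

theorem set_pathFrom (p : Pt) (A B : List Pt) (u v : Pt) :
    (pathFrom p (A ++ u :: v :: B)).set (A.length + 1) (p + A.sum + v) =
      pathFrom p (A ++ v :: u :: B) := by
  induction A generalizing p with
  | nil => cases B <;> simp [pathFrom, add_assoc, add_comm u v]
  | cons a A ih =>
    have := ih (p + a)
    simp only [pathFrom, List.cons_append, List.length_cons, List.set_cons_succ, List.sum_cons]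
      at this ⊢
    rw [← this, add_assoc p a]

theorem push_pathFrom (p : Pt) (A B : List Pt) (u v : Pt) :
    push (pathFrom p (A ++ u :: v :: B)) (A.length + 1) = pathFrom p (A ++ v :: u :: B) := by
  rw [← set_pathFrom p A B u v, push]
  congr 1
  have h1 := pt_pathFrom p A (u :: v :: B)
  have h2 := pt_pathFrom p (A ++ [u]) (v :: B)
  have h3 := pt_pathFrom p (A ++ [u, v]) B
  simp only [List.append_assoc, List.length_append, List.length_singleton, List.sum_append,
    List.sum_singleton, List.cons_append, List.nil_append, List.length_cons, List.length_nil,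
    List.sum_cons, List.sum_nil] at h2 h3
  simp only [Nat.add_sub_cancel, h1, h2, h3, zero_add, add_zero, Nat.add_assoc, Nat.reduceAdd]
  abel

theorem turnAt_pathFrom (s : ℤ → Prop) (p : Pt) (w : List Pt) (k : ℕ)
    (h : TurnAt s (pathFrom p w) k) :
    ∃ A u v B, w = A ++ u :: v :: B ∧ k = A.length + 1 ∧ s (det u v) := by
  obtain ⟨h0, h1, h2⟩ := h
  rw [pathFrom_length] at h1
  obtain ⟨j, rfl⟩ : ∃ j, k = j + 1 := ⟨k - 1, by omega⟩
  have hw : w = w.take j ++ w[j] :: w[j+1] :: w.drop (j + 2) := by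
    rw [List.cons_getElem_drop_succ, List.cons_getElem_drop_succ, List.take_append_drop]
  refine ⟨w.take j, w[j], w[j+1], w.drop (j + 2), hw, ?_, ?_⟩
  · rw [List.length_take]; omega
  · have hl : (w.take j).length = j := by rw [List.length_take]; omega
    have e1 := stepAt_pathFrom p (w.take j) (w[j+1] :: w.drop (j + 2)) w[j]
    have e2 := stepAt_pathFrom p (w.take j ++ [w[j]]) (w.drop (j + 2)) w[j+1]
    simp only [List.append_assoc, List.cons_append, List.nil_append, List.length_append,
      List.length_singleton, hl] at e2
    rw [← hw, hl] at e1
    rw [← hw] at e2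
    simp only [stepAt] at e1 e2
    simpa [e1, e2] using h2

/-- Admissible step lists. -/
def OKs (c d : ℕ) (w : List Pt) : Prop :=
  (∀ a ∈ w, 0 < a.1 ∨ (a.1 = 0 ∧ a.2 < 0)) ∧
  (∀ A B, w = A ++ B → 0 ≤ (d : ℤ) + A.sum.2 ∧ A.sum.2 ≤ 0) ∧
  w.sum = ((c : ℤ), -(d : ℤ))

/-- One step of the recursion on step lists. -/
def St (c d : ℕ) (s : ℤ → Prop) (w w' : List Pt) : Prop :=
  OKs c d w ∧ OKs c d w' ∧ ∃ A u v B, w = A ++ u :: v :: B ∧ s (det u v) ∧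
    (w' = A ++ (u + v) :: B ∨ w' = A ++ v :: u :: B)

theorem inside_heights (c d : ℕ) (w : List Pt)
    (h : Inside (rect c d) (pathFrom (0, (d : ℤ)) w)) (A B : List Pt) (hw : w = A ++ B) :
    0 ≤ (d : ℤ) + A.sum.2 ∧ A.sum.2 ≤ 0 := by
  have hm : pt (pathFrom (0, (d : ℤ)) w) A.length ∈ pathFrom (0, (d : ℤ)) w := by
    have hl : A.length < (pathFrom (0, (d : ℤ)) w).length := by
      rw [pathFrom_length, hw, List.length_append]; omega
    rw [pt, List.getD_eq_getElem _ _ hl]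
    exact List.getElem_mem _
  have := h _ hm
  rw [hw, pt_pathFrom] at this
  obtain ⟨-, -, h1, h2⟩ := this
  simp at h1 h2
  exact ⟨h1, by linarith⟩

theorem oks_cut (c d : ℕ) (A B : List Pt) (u v : Pt) (h : OKs c d (A ++ u :: v :: B)) :
    OKs c d (A ++ (u + v) :: B) := by
  obtain ⟨h1, h2, h3⟩ := h
  refine ⟨?_, ?_, ?_⟩
  · intro a ha
    have hu := h1 u (by simp)
    have hv := h1 v (by simp)
    simp only [List.mem_append, List.mem_cons] at ha
    rcases ha with ha | ha | ha
    · exact h1 a (by simp [ha])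
    · subst ha; simp only [Prod.fst_add, Prod.snd_add]; omega
    · exact h1 a (by simp [ha])
  · intro A' B' h
    rcases List.append_eq_append_iff.1 h with ⟨X, rfl, hX⟩ | ⟨X, rfl, hX⟩
    · cases X with
      | nil => simpa using h2 A (u :: v :: B) rfl
      | cons b X =>
        simp only [List.cons_append, List.cons.injEq] at hX
        obtain ⟨rfl, rfl⟩ := hX
        have := h2 (A ++ u :: v :: X) B' (by simp)
        simpa [add_assoc] using this
    · exact h2 A' (X ++ u :: v :: B) (by simp)
  · simpa [add_assoc] using h3

theorem oks_push (c d : ℕ) (A B : List Pt) (u v : Pt) (h : OKs c d (A ++ u :: v :: B))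
    (hin : Inside (rect c d) (pathFrom (0, (d : ℤ)) (A ++ v :: u :: B))) :
    OKs c d (A ++ v :: u :: B) := by
  obtain ⟨h1, h2, h3⟩ := h
  refine ⟨?_, ?_, ?_⟩
  · intro a ha
    apply h1
    simp only [List.mem_append, List.mem_cons] at ha ⊢
    tauto
  · intro A' B' h
    exact inside_heights c d _ hin _ _ h
  · rw [← h3]; simp only [List.sum_append, List.sum_cons]; abel

theorem chain_of_mult (c d : ℕ) (Init : List Pt → Prop) (s : ℤ → Prop) (γ : List Pt) (m : ℕ)
    (h : MultRel (rect c d) Init s γ m) (hm : m ≠ 0) (w : List Pt)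
    (hγ : γ = pathFrom (0, (d : ℤ)) w) (hok : OKs c d w) :
    ∃ w', Init (pathFrom (0, (d : ℤ)) w') ∧ Relation.ReflTransGen (St c d s) w w' := by
  induction h generalizing w with
  | init hi => exact ⟨w, hγ ▸ hi, .refl⟩
  | noTurn => exact absurd rfl hm
  | @stepIn γ k m' m'' hni hft hin h1 h2 ih1 ih2 =>
    subst hγ
    obtain ⟨A, u, v, B, rfl, rfl, hs⟩ := turnAt_pathFrom _ _ _ _ hft.1
    rw [cut_pathFrom] at ih1
    rw [push_pathFrom] at ih2 hin
    by_cases hm' : m' = 0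
    · have hm'' : m'' ≠ 0 := by rintro rfl; simp [hm'] at hm
      have ok' := oks_push _ _ _ _ _ _ hok hin
      obtain ⟨w', hw', hr⟩ := ih2 hm'' _ rfl ok'
      exact ⟨w', hw', .head ⟨hok, ok', A, u, v, B, rfl, hs, .inr rfl⟩ hr⟩
    · have ok' := oks_cut _ _ _ _ _ _ hok
      obtain ⟨w', hw', hr⟩ := ih1 hm' _ rfl ok'
      exact ⟨w', hw', .head ⟨hok, ok', A, u, v, B, rfl, hs, .inl rfl⟩ hr⟩
  | @stepOut γ k m' hni hft hin h1 ih1 =>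
    subst hγ
    obtain ⟨A, u, v, B, rfl, rfl, hs⟩ := turnAt_pathFrom _ _ _ _ hft.1
    rw [cut_pathFrom] at ih1
    have hm' : m' ≠ 0 := by rintro rfl; simp at hm
    have ok' := oks_cut _ _ _ _ _ _ hok
    obtain ⟨w', hw', hr⟩ := ih1 hm' _ rfl ok'
    exact ⟨w', hw', .head ⟨hok, ok', A, u, v, B, rfl, hs, .inl rfl⟩ hr⟩

theorem chain_of_multOf (c d : ℕ) (Init : List Pt → Prop) (s : ℤ → Prop) (w : List Pt)
    (hm : multOf (rect c d) Init s (pathFrom (0, (d : ℤ)) w) ≠ 0) (hok : OKs c d w) :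
    ∃ w', Init (pathFrom (0, (d : ℤ)) w') ∧ Relation.ReflTransGen (St c d s) w w' := by
  unfold multOf at hm
  split_ifs at hm with h
  · exact chain_of_mult c d Init s _ _ h.choose_spec hm w rfl hok
  · exact absurd rfl hm

theorem oks_of_path (c d : ℕ) (w : List Pt) (h : IsPathRect c d (pathFrom (0, (d : ℤ)) w)) :
    OKs c d w := by
  obtain ⟨h1, -, h3, h4⟩ := h
  refine ⟨?_, fun A B hw => inside_heights c d w h4 A B hw, ?_⟩
  · clear h3 h4
    generalize ((0 : ℤ), (d : ℤ)) = p at h1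
    induction w generalizing p with
    | nil => simp
    | cons a w ih =>
      intro b hb
      simp only [pathFrom, Increasing] at h1
      have h2 : lamLT p (p + a) ∧ Increasing (pathFrom (p + a) w) := by
        cases w with
        | nil =>
          refine ⟨?_, List.isChain_singleton _⟩
          exact List.isChain_pair.1 h1
        | cons e w =>
          simp only [pathFrom] at h1 ⊢
          exact List.isChain_cons_cons.1 h1
      rcases List.mem_cons.1 hb with rfl | hb
      · have := h2.1
        simp only [lamLT, Prod.fst_add, Prod.snd_add] at this
        omega
      · exact ih _ h2.2 b hb
  · have e := pt_pathFrom (0, (d : ℤ)) w []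
    rw [List.append_nil] at e
    have e2 : (pathFrom (0, (d : ℤ)) w).getLast? = some (pt (pathFrom (0, (d : ℤ)) w) w.length) := by
      rw [List.getLast?_eq_getElem?, pathFrom_length, pt, List.getD_eq_getElem?_getD]
      have : w.length < (pathFrom (0, (d : ℤ)) w).length := by rw [pathFrom_length]; omega
      simp [List.getElem?_eq_getElem this]
    rw [e2, e] at h3
    have h5 : ((0 : ℤ), (d : ℤ)) + w.sum = ((c : ℤ), 0) := by simpa using h3
    have h6 := congrArg Prod.fst h5
    have h7 := congrArg Prod.snd h5
    simp only [Prod.fst_add, Prod.snd_add] at h6 h7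
    exact Prod.ext (by simpa using h6) (by simp only; linarith)

theorem hSteps_eq (s : List ℕ) : hSteps s = s.map (fun k : ℕ => ((k : ℤ), (0 : ℤ))) := by
  unfold hSteps
  induction s with
  | nil => rfl
  | cons a s ih => simpa using ih

theorem dSteps_eq (s : List ℕ) : dSteps s = s.map (fun k : ℕ => ((0 : ℤ), -(k : ℤ))) := by
  unfold dSteps
  induction s with
  | nil => rfl
  | cons a s ih => simpa using ih

/-- Sum of the vertical components of the steps with label `j`. -/
def labSum (L : List (Pt × ℕ)) (j : ℕ) : ℤ := (L.map fun a => if a.2 = j then a.1.2 else 0).sum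

/-- Labelled step lists arising from `mult₊`. -/
def PL (d : ℕ) (L : List (Pt × ℕ)) : Prop :=
  (∀ a ∈ L, (a.1.1 = 0 ∧ a.1.2 < 0) ∨ a.1.1 = 1) ∧
  L.Pairwise (fun a b => a.1.1 = 1 → a.2 ≠ b.2) ∧
  (∀ j, j ≠ 0 → labSum L j = 0) ∧
  L.filter (fun a => decide (a.2 = 0)) = [(((0 : ℤ), -(d : ℤ)), 0)]

theorem PL_init (c d : ℕ) (hd : 0 < d) :
    ∃ L : List (Pt × ℕ), L.map Prod.fst = hSteps (List.replicate c 1) ++ dSteps [d] ∧ PL d L := by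
  refine ⟨(List.range c).map (fun i => (((1 : ℤ), (0 : ℤ)), i + 1)) ++
    [(((0 : ℤ), -(d : ℤ)), 0)], ?_, ?_, ?_, ?_, ?_⟩
  · rw [hSteps_eq, dSteps_eq]; simp [Function.comp_def]
  · intro a ha
    simp only [List.mem_append, List.mem_map, List.mem_singleton] at ha
    rcases ha with ⟨i, -, rfl⟩ | rfl
    · right; rfl
    · left; simpa using hd
  · rw [List.pairwise_append]
    refine ⟨?_, List.pairwise_singleton _ _, ?_⟩
    · rw [List.pairwise_map]
      refine (List.nodup_range (n := c)).imp ?_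
      intro a b h _; simpa using h
    · intro a ha b hb _
      simp only [List.mem_map, List.mem_singleton] at ha hb
      obtain ⟨i, -, rfl⟩ := ha
      subst hb
      simp
  · intro j hj
    simp [labSum, Function.comp_def, hj.symm]
  · simp [List.filter_append, List.filter_map, Function.comp_def]

theorem PL_back (c d : ℕ) (w w' : List Pt) (h : St c d (fun x => 0 < x) w w')
    (hL : ∃ L : List (Pt × ℕ), L.map Prod.fst = w' ∧ PL d L) :
    ∃ L : List (Pt × ℕ), L.map Prod.fst = w ∧ PL d L := by
  obtain ⟨hok, -, A, u, v, B, rfl, hdet, h⟩ := h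
  have hu := hok.1 u (by simp)
  have hv := hok.1 v (by simp)
  obtain ⟨L, hL, h1, h2, h3, h4⟩ := hL
  simp only [det] at hdet
  rcases h with rfl | rfl
  · rw [List.map_eq_append_iff] at hL
    obtain ⟨LA, LB', rfl, rfl, hL⟩ := hL
    rw [List.map_eq_cons_iff] at hL
    obtain ⟨⟨z, l⟩, LB, rfl, hz, rfl⟩ := hL
    simp only at hz
    subst hz
    have hz := h1 (u + v, l) (by simp)
    simp only [Prod.fst_add, Prod.snd_add] at hz
    have key : u.1 = 0 ∧ u.2 < 0 ∧ v.1 = 1 := by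
      rcases hu with hu | ⟨hu, hu'⟩ <;> rcases hv with hv | ⟨hv, hv'⟩
      · omega
      · rw [hv] at hdet; nlinarith
      · omega
      · rw [hu, hv] at hdet; simp at hdet
    have hl : l ≠ 0 := by
      rintro rfl
      have hm : (u + v, 0) ∈ (LA ++ (u + v, 0) :: LB).filter (fun a => decide (a.2 = 0)) := by
        simp
      rw [h4] at hm
      simp [Prod.ext_iff, key.1, key.2.2] at hm
    refine ⟨LA ++ (u, l) :: (v, l) :: LB, by simp, ?_, ?_, ?_, ?_⟩
    · intro a ha
      simp only [List.mem_append, List.mem_cons] at ha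
      rcases ha with ha | rfl | rfl | ha
      · exact h1 a (by simp [ha])
      · left; exact ⟨key.1, key.2.1⟩
      · right; exact key.2.2
      · exact h1 a (by simp [ha])
    · rw [List.pairwise_append] at h2 ⊢
      obtain ⟨p1, p2, p3⟩ := h2
      rw [List.pairwise_cons] at p2
      refine ⟨p1, ?_, ?_⟩
      · rw [List.pairwise_cons, List.pairwise_cons]
        refine ⟨fun b hb h0 => ?_, fun b hb h0 => ?_, p2.2⟩
        · simp [key.1] at h0
        · exact p2.1 b hb (by simp [key.1, key.2.2])
      · intro a ha b hb
        simp only [List.mem_cons] at hb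
        rcases hb with rfl | rfl | hb
        · exact p3 a ha (u + v, l) (by simp)
        · exact p3 a ha (u + v, l) (by simp)
        · exact p3 a ha b (by simp [hb])
    · intro j hj
      rw [← h3 j hj]
      simp only [labSum, List.map_append, List.map_cons, List.sum_append, List.sum_cons]
      split_ifs <;> simp <;> ring
    · rw [← h4]
      simp [List.filter_append, List.filter_cons, hl]
  · rw [List.map_eq_append_iff] at hL
    obtain ⟨LA, LB', rfl, rfl, hL⟩ := hL
    rw [List.map_eq_cons_iff] at hL
    obtain ⟨⟨v, lv⟩, LB'', rfl, rfl, hL⟩ := hL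
    rw [List.map_eq_cons_iff] at hL
    obtain ⟨⟨u, lu⟩, LB, rfl, rfl, rfl⟩ := hL
    simp only at *
    have hp : (LA ++ (u, lu) :: (v, lv) :: LB).Perm (LA ++ (v, lv) :: (u, lu) :: LB) :=
      (List.Perm.swap _ _ _).append_left _
    refine ⟨LA ++ (u, lu) :: (v, lv) :: LB, by simp, ?_, ?_, ?_, ?_⟩
    · intro a ha
      exact h1 a (hp.mem_iff.1 ha)
    · rw [List.pairwise_append] at h2 ⊢
      obtain ⟨p1, p2, p3⟩ := h2
      rw [List.pairwise_cons, List.pairwise_cons] at p2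
      refine ⟨p1, ?_, ?_⟩
      · rw [List.pairwise_cons, List.pairwise_cons]
        refine ⟨fun b hb h0 => ?_, fun b hb h0 => ?_, p2.2.2⟩
        · simp only [List.mem_cons] at hb
          rcases hb with rfl | hb
          · have hv1 := h1 (v, lv) (by simp)
            simp only at h0 hv1
            rcases hv1 with ⟨e1, e2⟩ | e
            · rw [h0, e1] at hdet; linarith
            · exact fun e' => p2.1 (u, lu) (by simp) e e'.symm
          · exact p2.2.1 b hb h0
        · exact p2.1 b (by simp [hb]) h0
      · intro a ha b hb
        simp only [List.mem_cons] at hb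
        rcases hb with rfl | rfl | hb
        · exact p3 a ha (u, lu) (by simp)
        · exact p3 a ha (v, lv) (by simp)
        · exact p3 a ha b (by simp [hb])
    · intro j hj
      rw [← h3 j hj]
      exact (hp.map _).sum_eq
    · have := hp.filter (fun a => decide (a.2 = 0))
      rw [h4] at this
      exact List.perm_singleton.1 this

/-- Multiset of down steps of a step list. -/
def Dn (w : List Pt) : Multiset Pt :=
  Multiset.filter (fun v => v.1 = 0 ∧ v.2 < 0) (w : Multiset Pt)

theorem Dn_back (c d : ℕ) (w w' : List Pt) (h : St c d (fun x => x < 0) w w') :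
    Dn w' ≤ Dn w := by
  obtain ⟨hok, -, A, u, v, B, rfl, hdet, h⟩ := h
  have hu := hok.1 u (by simp)
  have hv := hok.1 v (by simp)
  simp only [det] at hdet
  rcases h with rfl | rfl
  · have hn : ¬((u + v).1 = 0 ∧ (u + v).2 < 0) := by
      rintro ⟨h, -⟩
      simp only [Prod.fst_add] at h
      have e1 : u.1 = 0 := by omega
      have e2 : v.1 = 0 := by omega
      rw [e1, e2] at hdet; simp at hdet
    have e : Dn (A ++ (u + v) :: B) = Dn (A ++ B) := by
      simp only [Dn, Multiset.filter_coe, List.filter_append, List.filter_cons]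
      rw [if_neg (by simpa using hn)]
    rw [e]
    apply Multiset.filter_le_filter
    apply List.Sublist.subperm
    apply List.Sublist.append_left
    exact (List.sublist_cons_self v B).trans (List.sublist_cons_self u _)
  · apply le_of_eq
    unfold Dn
    congr 1
    exact Multiset.coe_eq_coe.2 ((List.Perm.swap _ _ _).append_left _)

/-- The first non-vertical step is up-right, or the full horizontal step. -/
def UU (c : ℕ) (w : List Pt) : Prop :=
  ∃ A f B, w = A ++ f :: B ∧ (∀ a ∈ A, a.1 = 0) ∧ 0 < f.1 ∧ (0 < f.2 ∨ f = ((c : ℤ), 0))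

theorem UU_back (c d : ℕ) (w w' : List Pt) (h : St c d (fun x => x < 0) w w') (hU : UU c w') :
    UU c w := by
  obtain ⟨hok, -, X, u, v, Y, rfl, hdet, h⟩ := h
  have hu := hok.1 u (by simp)
  have hv := hok.1 v (by simp)
  simp only [det] at hdet
  obtain ⟨A, f, B, hw, hA, hf, hf'⟩ := hU
  have hf2 : 0 ≤ f.2 := by
    rcases hf' with h | rfl
    · exact h.le
    · simp
  rcases h with rfl | rfl
  · have hmerge : A = X → f = u + v → UU c (X ++ u :: v :: Y) := by
      rintro rfl rfl
      simp only [Prod.fst_add, Prod.snd_add] at hf hf2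
      refine ⟨A, u, v :: Y, rfl, hA, ?_, Or.inl ?_⟩
      · rcases hu with hu | ⟨e1, e2⟩
        · exact hu
        · rw [e1] at hdet; nlinarith
      · by_contra hneg
        have h1 : 0 ≤ u.1 * v.2 := mul_nonneg (by omega) (by omega)
        have h2 : u.2 * v.1 ≤ 0 := mul_nonpos_of_nonpos_of_nonneg (by omega) (by omega)
        linarith
    rcases List.append_eq_append_iff.1 hw with ⟨C, rfl, hC⟩ | ⟨C, rfl, hC⟩
    · cases C with
      | nil =>
        simp only [List.nil_append, List.cons.injEq] at hC
        exact hmerge (by simp) hC.1.symm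
      | cons z C =>
        simp only [List.cons_append, List.cons.injEq] at hC
        obtain ⟨rfl, rfl⟩ := hC
        have h0 := hA (u + v) (by simp)
        simp only [Prod.fst_add] at h0
        refine ⟨X ++ u :: v :: C, f, B, by simp, ?_, hf, hf'⟩
        intro a ha
        simp only [List.mem_append, List.mem_cons] at ha
        rcases ha with ha | rfl | rfl | ha
        · exact hA a (by simp [ha])
        · omega
        · omega
        · exact hA a (by simp [ha])
    · cases C with
      | nil =>
        simp only [List.nil_append, List.cons.injEq] at hC
        exact hmerge (by simp) hC.1
      | cons z C =>
        simp only [List.cons_append, List.cons.injEq] at hC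
        obtain ⟨rfl, rfl⟩ := hC
        exact ⟨A, f, C ++ u :: v :: Y, by simp, hA, hf, hf'⟩
  · have hswap : A = X → f = v → UU c (X ++ u :: v :: Y) := by
      rintro rfl rfl
      have hu1 : 0 < u.1 := by
        rcases hu with hu | ⟨e1, e2⟩
        · exact hu
        · rw [e1] at hdet; nlinarith
      refine ⟨A, u, f :: Y, rfl, hA, hu1, Or.inl ?_⟩
      by_contra hneg
      have h1 : 0 ≤ u.1 * f.2 := mul_nonneg (by omega) (by omega)
      have h2 : u.2 * f.1 ≤ 0 := mul_nonpos_of_nonpos_of_nonneg (by omega) (by omega)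
      linarith
    rcases List.append_eq_append_iff.1 hw with ⟨C, rfl, hC⟩ | ⟨C, rfl, hC⟩
    · match C, hC, hA, hswap with
      | [], hC, hA, hswap =>
        simp only [List.nil_append, List.cons.injEq] at hC
        exact hswap (by simp) hC.1.symm
      | [z], hC, hA, hswap =>
        simp only [List.cons_append, List.nil_append, List.cons.injEq] at hC
        obtain ⟨rfl, rfl, rfl⟩ := hC
        exact ⟨X, u, v :: Y, rfl, fun a ha => hA a (by simp [ha]), hf, hf'⟩
      | z :: z' :: C, hC, hA, hswap =>
        simp only [List.cons_append, List.cons.injEq] at hC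
        obtain ⟨rfl, rfl, rfl⟩ := hC
        refine ⟨X ++ u :: v :: C, f, B, by simp, ?_, hf, hf'⟩
        intro a ha
        simp only [List.mem_append, List.mem_cons] at ha
        rcases ha with ha | ha | ha | ha <;> exact hA a (by simp [ha])
    · cases C with
      | nil =>
        simp only [List.nil_append, List.cons.injEq] at hC
        exact hswap (by simp) hC.1
      | cons z C =>
        simp only [List.cons_append, List.cons.injEq] at hC
        obtain ⟨rfl, rfl⟩ := hC
        exact ⟨A, f, C ++ u :: v :: Y, by simp, hA, hf, hf'⟩

theorem last_fwd (c d : ℕ) (w w' : List Pt) (h : St c d (fun x => x < 0) w w')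
    (hl : ∃ A, w = A ++ [((1 : ℤ), (0 : ℤ))]) : ∃ A, w' = A ++ [((1 : ℤ), (0 : ℤ))] := by
  obtain ⟨hok, -, X, u, v, Y, rfl, hdet, h⟩ := h
  obtain ⟨A, hA⟩ := hl
  rcases List.eq_nil_or_concat Y with rfl | ⟨Y, y, rfl⟩
  · exfalso
    have hv : v = (1, 0) := by
      have h2 := congrArg List.getLast? hA
      simpa using h2
    subst hv
    have h1 := hok.2.1 X _ rfl
    have h2 := congrArg Prod.snd hok.2.2
    simp [det] at h1 h2 hdet
    linarith [h1.1]
  · have hy : y = (1, 0) := by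
      have h2 := congrArg List.getLast? hA
      simpa [List.getLast?_append, List.getLast?_cons] using h2
    subst hy
    rcases h with rfl | rfl
    · exact ⟨X ++ (u + v) :: Y, by simp⟩
    · exact ⟨X ++ v :: u :: Y, by simp⟩

/-- Some full down step is preceded only by horizontal steps. -/
def TT (d : ℕ) (w : List Pt) : Prop :=
  ∃ A B, w = A ++ ((0 : ℤ), -(d : ℤ)) :: B ∧ ∀ a ∈ A, a.2 = 0

theorem sum_snd_zero (A : List Pt) (h : ∀ a ∈ A, a.2 = 0) : A.sum.2 = 0 := by
  induction A with
  | nil => rfl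
  | cons a A ih =>
    simp only [List.sum_cons, Prod.snd_add]
    rw [h a (by simp), ih (fun b hb => h b (by simp [hb]))]; rfl

theorem TT_back (c d : ℕ) (hd : 0 < d) (w w' : List Pt) (h : St c d (fun x => x < 0) w w')
    (hT : TT d w') : TT d w := by
  obtain ⟨hok, -, X, u, v, Y, rfl, hdet, h⟩ := h
  have hu := hok.1 u (by simp)
  have hv := hok.1 v (by simp)
  obtain ⟨A, B, hw, hA⟩ := hT
  have hdZ : (0 : ℤ) < d := by exact_mod_cast hd
  simp only [det] at hdet
  rcases h with rfl | rfl
  · have hmerge : u + v = ((0 : ℤ), -(d : ℤ)) → False := by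
      intro h
      have h1 := congrArg Prod.fst h
      simp only [Prod.fst_add] at h1
      have e1 : u.1 = 0 := by omega
      have e2 : v.1 = 0 := by omega
      rw [e1, e2] at hdet; simp at hdet
    rcases List.append_eq_append_iff.1 hw with ⟨C, rfl, hC⟩ | ⟨C, rfl, hC⟩
    · cases C with
      | nil =>
        simp only [List.nil_append, List.cons.injEq] at hC
        exact (hmerge hC.1).elim
      | cons z C =>
        simp only [List.cons_append, List.cons.injEq] at hC
        obtain ⟨rfl, rfl⟩ := hC
        exfalso
        have h0 := hA (u + v) (by simp)
        have h1 := (hok.2.1 (X ++ [u]) (v :: (C ++ (0, -(d : ℤ)) :: B)) (by simp)).2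
        have h2 := sum_snd_zero X (fun a ha => hA a (by simp [ha]))
        simp only [List.sum_append, List.sum_singleton, Prod.snd_add] at h0 h1
        have h3 : v.2 = - u.2 := by omega
        rw [h3] at hdet
        have h4 : u.2 ≤ 0 := by omega
        have h5 : u.2 * (u.1 + v.1) ≤ 0 := mul_nonpos_of_nonpos_of_nonneg h4 (by omega)
        linarith
    · cases C with
      | nil =>
        simp only [List.nil_append, List.cons.injEq] at hC
        exact (hmerge hC.1.symm).elim
      | cons z C =>
        simp only [List.cons_append, List.cons.injEq] at hC
        obtain ⟨rfl, rfl⟩ := hC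
        exact ⟨A, C ++ u :: v :: Y, by simp, hA⟩
  · have hswap : A = X → v = ((0 : ℤ), -(d : ℤ)) → TT d (X ++ u :: v :: Y) := by
      rintro rfl rfl
      refine ⟨A ++ [u], Y, by simp, ?_⟩
      have h1 := hok.2.1 (A ++ [u]) (((0 : ℤ), -(d : ℤ)) :: Y) (by simp)
      have h3 := hok.2.1 (A ++ [u, ((0 : ℤ), -(d : ℤ))]) Y (by simp)
      have h2 := sum_snd_zero A hA
      simp at h1 h3
      intro a ha
      simp only [List.mem_append, List.mem_singleton] at ha
      rcases ha with ha | rfl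
      · exact hA a ha
      · linarith [h1.2, h3.1]
    rcases List.append_eq_append_iff.1 hw with ⟨C, rfl, hC⟩ | ⟨C, rfl, hC⟩
    · match C, hC, hA, hswap with
      | [], hC, hA, hswap =>
        simp only [List.nil_append, List.cons.injEq] at hC
        exact hswap (by simp) hC.1
      | [z], hC, hA, hswap =>
        simp only [List.cons_append, List.nil_append, List.cons.injEq] at hC
        obtain ⟨rfl, rfl, rfl⟩ := hC
        exact ⟨X, v :: Y, rfl, fun a ha => hA a (by simp [ha])⟩
      | z :: z' :: C, hC, hA, hswap =>
        simp only [List.cons_append, List.cons.injEq] at hC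
        obtain ⟨rfl, rfl, rfl⟩ := hC
        refine ⟨X ++ u :: v :: C, B, by simp, ?_⟩
        intro a ha
        simp only [List.mem_append, List.mem_cons] at ha
        rcases ha with ha | ha | ha | ha <;> exact hA a (by simp [ha])
    · cases C with
      | nil =>
        simp only [List.nil_append, List.cons.injEq] at hC
        exact hswap (by simp) hC.1.symm
      | cons z C =>
        simp only [List.cons_append, List.cons.injEq] at hC
        obtain ⟨rfl, rfl⟩ := hC
        exact ⟨A, C ++ u :: v :: Y, by simp, hA⟩

theorem stepAt_getElem (p : Pt) (w : List Pt) (k : ℕ) (hk : k < w.length) :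
    stepAt (pathFrom p w) k = w[k] := by
  have hw : w = w.take k ++ w[k] :: w.drop (k + 1) := by
    rw [List.cons_getElem_drop_succ, List.take_append_drop]
  have hl : (w.take k).length = k := by rw [List.length_take]; omega
  have e1 := stepAt_pathFrom p (w.take k) (w.drop (k + 1)) w[k]
  rwa [← hw, hl] at e1

theorem labSum_append (X Y : List (Pt × ℕ)) (j : ℕ) :
    labSum (X ++ Y) j = labSum X j + labSum Y j := by
  simp [labSum]

theorem labSum_cons (a : Pt × ℕ) (Y : List (Pt × ℕ)) (j : ℕ) :
    labSum (a :: Y) j = (if a.2 = j then a.1.2 else 0) + labSum Y j := by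
  simp [labSum]

theorem labSum_nonpos (X : List (Pt × ℕ)) (j : ℕ) (h : ∀ a ∈ X, a.2 = j → a.1.2 ≤ 0) :
    labSum X j ≤ 0 := by
  induction X with
  | nil => simp [labSum]
  | cons a X ih =>
    rw [labSum_cons]
    have h1 := ih (fun b hb => h b (by simp [hb]))
    have h2 := h a (by simp)
    split_ifs with h3
    · linarith [h2 h3]
    · linarith

theorem labSum_zero (X : List (Pt × ℕ)) (j : ℕ) (h : ∀ a ∈ X, a.2 ≠ j) :
    labSum X j = 0 := by
  induction X with
  | nil => simp [labSum]
  | cons a X ih =>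
    rw [labSum_cons, ih (fun b hb => h b (by simp [hb])), if_neg (h a (by simp))]; rfl

theorem labSum_filter (X : List (Pt × ℕ)) (j : ℕ) (p : Pt × ℕ → Bool)
    (h : ∀ a ∈ X, a.2 = j → p a = true) : labSum (X.filter p) j = labSum X j := by
  induction X with
  | nil => simp
  | cons a X ih =>
    have h1 := ih (fun b hb => h b (by simp [hb]))
    have h2 := h a (by simp)
    by_cases hp : p a = true
    · rw [List.filter_cons_of_pos hp, labSum_cons, labSum_cons, h1]
    · rw [List.filter_cons_of_neg hp, labSum_cons, h1, if_neg (fun e => hp (h2 e)), zero_add]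

theorem PL_right (d : ℕ) (L X Y : List (Pt × ℕ)) (a : Pt × ℕ) (hL : PL d L)
    (h : L = X ++ a :: Y) (ha : a.1.1 = 1) :
    a.2 ≠ 0 ∧ (∀ b ∈ Y, b.2 ≠ a.2) ∧ (∀ b ∈ X, b.2 = a.2 → b.1.1 = 0 ∧ b.1.2 < 0) ∧
      a.1.2 = - labSum X a.2 ∧ 0 ≤ a.1.2 := by
  obtain ⟨h1, h2, h3, h4⟩ := hL
  have hj : a.2 ≠ 0 := by
    intro h0
    have : a ∈ L.filter (fun a => decide (a.2 = 0)) := by simp [h, h0]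
    rw [h4, List.mem_singleton] at this
    rw [this] at ha
    simp at ha
  rw [h, List.pairwise_append, List.pairwise_cons] at h2
  obtain ⟨p1, ⟨p2, p2'⟩, p3⟩ := h2
  have hY : ∀ b ∈ Y, b.2 ≠ a.2 := fun b hb e => p2 b hb ha e.symm
  have hX : ∀ b ∈ X, b.2 = a.2 → b.1.1 = 0 ∧ b.1.2 < 0 := by
    intro b hb e
    rcases h1 b (by simp [h, hb]) with h | h'
    · exact h
    · exact absurd e (p3 b hb a (by simp) h')
  have hs := h3 a.2 hj
  rw [h, labSum_append, labSum_cons, labSum_zero Y _ hY, if_pos rfl] at hs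
  have hn := labSum_nonpos X a.2 (fun b hb e => (hX b hb e).2.le)
  exact ⟨hj, hY, hX, by linarith, by linarith⟩

theorem PL_down (d : ℕ) (L : List (Pt × ℕ)) (a : Pt × ℕ) (hL : PL d L)
    (h : a ∈ L) (ha : a.1.2 < 0) (hj : a.2 ≠ 0) :
    ∃ b ∈ L, b.2 = a.2 ∧ b.1.1 = 1 ∧ 0 < b.1.2 := by
  obtain ⟨h1, h2, h3, h4⟩ := hL
  by_contra hcon
  push Not at hcon
  have hneg : ∀ b ∈ L, b.2 = a.2 → b.1.2 ≤ 0 := by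
    intro b hb e
    rcases h1 b hb with h | h'
    · exact h.2.le
    · exact hcon b hb e h'
  obtain ⟨X, Y, rfl⟩ := List.append_of_mem h
  have hs := h3 a.2 hj
  rw [labSum_append, labSum_cons, if_pos rfl] at hs
  have e1 := labSum_nonpos X a.2 (fun b hb => hneg b (by simp [hb]))
  have e2 := labSum_nonpos Y a.2 (fun b hb => hneg b (by simp [hb]))
  linarith

theorem fst_sum_nonneg (w : List Pt) (hw : ∀ a ∈ w, 0 ≤ a.1) : 0 ≤ w.sum.1 := by
  induction w with
  | nil => simp
  | cons a w ih =>
    simp only [List.sum_cons, Prod.fst_add]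
    have := hw a (by simp)
    have := ih (fun b hb => hw b (by simp [hb]))
    linarith

theorem two_rights (w : List Pt) (p q : Pt) (hw : ∀ a ∈ w, 0 ≤ a.1) (hp : p ∈ w) (hq : q ∈ w)
    (hpq : p ≠ q) : p.1 + q.1 ≤ w.sum.1 := by
  have e1 := List.perm_cons_erase hp
  have hq' : q ∈ w.erase p := (List.mem_erase_of_ne hpq.symm).2 hq
  have e2 := List.perm_cons_erase hq'
  have e3 := e1.trans (e2.cons p)
  rw [e3.sum_eq]
  simp only [List.sum_cons, Prod.fst_add]
  have := fst_sum_nonneg ((w.erase p).erase q)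
    (fun a ha => hw a (List.mem_of_mem_erase (List.mem_of_mem_erase ha)))
  linarith

theorem Dn_card (w : List Pt) (h : ∀ a ∈ w, (a.1 = 0 ∧ a.2 < 0) ∨ a.1 = 1) :
    ((Dn w).card : ℤ) + w.sum.1 = w.length := by
  induction w with
  | nil => simp [Dn]
  | cons a w ih =>
    have h1 := ih (fun b hb => h b (by simp [hb]))
    have e : Dn (a :: w) = if a.1 = 0 ∧ a.2 < 0 then a ::ₘ Dn w else Dn w := by
      unfold Dn
      rw [← Multiset.cons_coe, Multiset.filter_cons]
      split_ifs <;> simp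
    rw [e, List.sum_cons, Prod.fst_add, List.length_cons]
    rcases h a (by simp) with h2 | h2
    · rw [if_pos h2, Multiset.card_cons, h2.1]; push_cast; linarith
    · rw [if_neg (by omega), h2]; push_cast; linarith

/-- The labelled down steps with nonzero label. -/
def NN (L : List (Pt × ℕ)) : List (Pt × ℕ) :=
  L.filter (fun a => decide ((a.1.1 = 0 ∧ a.1.2 < 0) ∧ a.2 ≠ 0))

theorem Dn_eq (d : ℕ) (hd : 0 < d) (L : List (Pt × ℕ)) (hL : PL d L) :
    Dn (L.map Prod.fst) = ((NN L).map Prod.fst : Multiset Pt) + {((0 : ℤ), -(d : ℤ))} := by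
  have e1 : Dn (L.map Prod.fst) =
      ((L : Multiset (Pt × ℕ)).filter (fun a => a.1.1 = 0 ∧ a.1.2 < 0)).map Prod.fst := by
    rw [Dn, ← Multiset.map_coe, Multiset.filter_map]; rfl
  have e2 := Multiset.filter_add_not (fun a : Pt × ℕ => a.2 ≠ 0)
    ((L : Multiset (Pt × ℕ)).filter (fun a => a.1.1 = 0 ∧ a.1.2 < 0))
  rw [e1, ← e2, Multiset.map_add]
  congr 1
  · rw [Multiset.filter_filter, NN, ← Multiset.map_coe, ← Multiset.filter_coe]
    congr 1
    apply Multiset.filter_congr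
    intro a _; tauto
  · have e3 : Multiset.filter (fun a : Pt × ℕ => ¬ a.2 ≠ 0)
        ((L : Multiset (Pt × ℕ)).filter (fun a => a.1.1 = 0 ∧ a.1.2 < 0)) =
        Multiset.filter (fun a => a.1.1 = 0 ∧ a.1.2 < 0)
          ((L.filter (fun a => decide (a.2 = 0)) : List (Pt × ℕ)) : Multiset (Pt × ℕ)) := by
      rw [← Multiset.filter_coe, Multiset.filter_comm]
      congr 1
      apply Multiset.filter_congr
      intro a _; tauto
    rw [e3, hL.2.2.2]
    simp [Multiset.filter_singleton, hd]

theorem core (n d : ℕ) (hd : 0 < d) (x : Fin n → ℕ) (hx : ∀ i, 0 < x i)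
    (hinj : Function.Injective x)
    (L : List (Pt × ℕ)) (hL : PL d L)
    (hD : Dn (L.map Prod.fst) = ((List.ofFn fun i => ((0 : ℤ), -(x i : ℤ))) : Multiset Pt) +
        {((0 : ℤ), -(d : ℤ))}) :
    ∃ (ℓ : ℕ) (I : Fin ℓ → Finset (Fin n)),
      (∀ a, (I a).Nonempty) ∧ (∀ a b, a ≠ b → Disjoint (I a) (I b)) ∧
      (∀ i, ∃ a, i ∈ I a) ∧
      Multiset.filter (fun v : Pt => 0 < v.1 ∧ 0 < v.2) (L.map Prod.fst : Multiset Pt) =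
        ((List.ofFn fun a => ((1 : ℤ), ∑ i ∈ I a, (x i : ℤ))) : Multiset Pt) ∧
      ∀ a, ∃ X Y, L.map Prod.fst = X ++ ((1 : ℤ), ∑ i ∈ I a, (x i : ℤ)) :: Y ∧
        ∀ i ∈ I a, ((0 : ℤ), -(x i : ℤ)) ∈ X := by
  rw [Dn_eq d hd L hL] at hD
  have hM := add_right_cancel hD
  have hg : Function.Injective (fun i => ((0 : ℤ), -(x i : ℤ))) := by
    intro i j h
    simp at h
    exact hinj h
  have hnodM : ((NN L).map Prod.fst).Nodup := by
    rw [(Multiset.coe_eq_coe.1 hM).nodup_iff]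
    exact List.nodup_ofFn.2 hg
  have hmem : ∀ z, z ∈ (NN L).map Prod.fst ↔ ∃ i, ((0 : ℤ), -(x i : ℤ)) = z := by
    intro z
    rw [(Multiset.coe_eq_coe.1 hM).mem_iff, List.mem_ofFn]
  have hlab : ∀ i, ∃ l, (((0 : ℤ), -(x i : ℤ)), l) ∈ NN L := by
    intro i
    obtain ⟨⟨z, l⟩, h1, h2⟩ := List.mem_map.1 ((hmem _).2 ⟨i, rfl⟩)
    simp only at h2
    exact ⟨l, h2 ▸ h1⟩
  choose lab hlab using hlab
  have hNmem : ∀ a, a ∈ NN L ↔ ∃ i, (((0 : ℤ), -(x i : ℤ)), lab i) = a := by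
    intro a
    constructor
    · intro ha
      obtain ⟨i, hi⟩ := (hmem a.1).1 (List.mem_map_of_mem ha)
      exact ⟨i, List.inj_on_of_nodup_map hnodM (hlab i) ha hi⟩
    · rintro ⟨i, rfl⟩; exact hlab i
  have hNperm : (NN L).Perm (List.ofFn fun i => (((0 : ℤ), -(x i : ℤ)), lab i)) := by
    rw [List.perm_ext_iff_of_nodup (List.Nodup.of_map _ hnodM)]
    · intro a; rw [hNmem, List.mem_ofFn]
    · refine List.nodup_ofFn.2 (fun i j h => hg ?_)
      simp only [Prod.mk.injEq] at h ⊢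
      exact h.1
  have hNsum : ∀ j, labSum (NN L) j = - ∑ i ∈ Finset.univ.filter (fun i => lab i = j), (x i : ℤ) := by
    intro j
    unfold labSum
    rw [(hNperm.map _).sum_eq, List.map_ofFn, List.sum_ofFn, Finset.sum_filter,
      ← Finset.sum_neg_distrib]
    apply Finset.sum_congr rfl
    intro i _
    simp only [Function.comp]
    split_ifs <;> simp
  have hval : ∀ a ∈ L, a.1.1 = 1 →
      a.1 = ((1 : ℤ), ∑ i ∈ Finset.univ.filter (fun i => lab i = a.2), (x i : ℤ)) := by
    intro a ha ha1
    obtain ⟨X, Y, hXY⟩ := List.append_of_mem ha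
    obtain ⟨h1, h2, h3, h4, -⟩ := PL_right d L X Y a hL hXY ha1
    have e : labSum (NN L) a.2 = labSum X a.2 := by
      rw [NN, hXY, List.filter_append, labSum_append, List.filter_cons_of_neg (by simp [ha1]),
        labSum_filter X, labSum_zero (List.filter _ Y), add_zero]
      · intro b hb; exact h2 b (List.mem_of_mem_filter hb)
      · intro b hb e
        have := h3 b hb e
        simp [this.1, this.2, e, h1]
    rw [hNsum] at e
    refine Prod.ext ha1 ?_
    simp only
    linarith
  set R := L.filter (fun a => decide (0 < a.1.1 ∧ 0 < a.1.2)) with hR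
  have hRmem : ∀ a ∈ R, a ∈ L ∧ a.1.1 = 1 ∧ 0 < a.1.2 := by
    intro a ha
    have := List.mem_filter.1 ha
    have h2 : 0 < a.1.1 ∧ 0 < a.1.2 := by simpa using this.2
    refine ⟨this.1, ?_, h2.2⟩
    rcases hL.1 a this.1 with h | h <;> omega
  have hRpw : R.Pairwise (fun a b => a.2 ≠ b.2) := by
    have h1 : R.Pairwise (fun a b => a.1.1 = 1 → a.2 ≠ b.2) := hL.2.1.filter _
    exact h1.imp_of_mem (fun {a b} ha hb h => h (hRmem a ha).2.1)
  refine ⟨R.length, fun a => Finset.univ.filter (fun i => lab i = (R.get a).2), ?_, ?_, ?_, ?_, ?_⟩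
  · intro a
    rw [Finset.nonempty_iff_ne_empty]
    intro h
    have h1 := hRmem (R.get a) (List.get_mem _ _)
    have h2 := hval _ h1.1 h1.2.1
    simp only at h
    rw [h] at h2
    have h3 := h1.2.2
    rw [h2] at h3
    simp at h3
  · intro a b hab
    rw [Finset.disjoint_left]
    intro i hi hj
    simp only [Finset.mem_filter, Finset.mem_univ, true_and] at hi hj
    rw [List.pairwise_iff_get] at hRpw
    rcases lt_or_gt_of_ne hab with h | h
    · exact hRpw a b h (hi.symm.trans hj)
    · exact hRpw b a h (hj.symm.trans hi)
  · intro i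
    have h1 := List.mem_filter.1 (hlab i)
    have h1' := h1.2
    simp only [decide_eq_true_eq] at h1'
    obtain ⟨b, hb, hb1, hb2, hb3⟩ := PL_down d L _ hL h1.1 h1'.1.2 h1'.2
    have hbR : b ∈ R := by
      rw [hR, List.mem_filter]
      refine ⟨hb, ?_⟩
      simp [hb2, hb3]
    obtain ⟨a, ha⟩ := List.get_of_mem hbR
    refine ⟨a, ?_⟩
    simp only [Finset.mem_filter, Finset.mem_univ, true_and, ha, hb1]
  · have e1 : Multiset.filter (fun v : Pt => 0 < v.1 ∧ 0 < v.2) (L.map Prod.fst : Multiset Pt) =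
        ((R.map Prod.fst : List Pt) : Multiset Pt) := by
      rw [← Multiset.map_coe, Multiset.filter_map, hR, ← Multiset.map_coe, ← Multiset.filter_coe]
      rfl
    rw [e1]
    congr 1
    conv_lhs => rw [← List.ofFn_get R]
    rw [List.map_ofFn]
    congr 1
    funext a
    have h1 := hRmem (R.get a) (List.get_mem _ _)
    exact hval _ h1.1 h1.2.1
  · intro a
    have h1 := hRmem (R.get a) (List.get_mem _ _)
    obtain ⟨X, Y, hXY⟩ := List.append_of_mem h1.1
    obtain ⟨g1, g2, g3, g4, -⟩ := PL_right d L X Y _ hL hXY h1.2.1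
    refine ⟨X.map Prod.fst, Y.map Prod.fst, ?_, ?_⟩
    · rw [← hval _ h1.1 h1.2.1, hXY]
      simp
    · intro i hi
      simp only [Finset.mem_filter, Finset.mem_univ, true_and] at hi
      have h2 := (List.mem_filter.1 (hlab i)).1
      rw [hXY, List.mem_append, List.mem_cons] at h2
      rcases h2 with h2 | h2 | h2
      · exact List.mem_map.2 ⟨_, h2, rfl⟩
      · have := h1.2.1
        rw [← h2] at this
        simp at this
      · exact absurd hi (g2 _ h2)

/-- Structure of the paths with nonzero multiplicity in the rectangle with
boundary data `μ₁ = (c)`, `μ₂ = (1,…,1)`, `ν₁ = (x₁,…,xₙ)`, `ν₂ = (d)`, for generic `x`. -/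
theorem structure_of_nonzero_paths (c n : ℕ) (hc : 0 < c) (hn : 0 < n)
    (x : Fin n → ℕ) (hx : ∀ i, 0 < x i) (hgen : Generic x)
    (γ : List Pt) (hγ : IsPathRect c (∑ i, x i) γ) (hlen : γ.length = n + c + 2)
    (hmult : multRect c (∑ i, x i) {c} (Multiset.replicate c 1)
        ((List.ofFn x : List ℕ) : Multiset ℕ) {∑ i, x i} γ ≠ 0) :
    -- (1) the last step is the full right edge
    (pt γ (n + c) = ((c : ℤ), ((∑ i, x i : ℕ) : ℤ)) ∧
      pt γ (n + c + 1) = ((c : ℤ), 0)) ∧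
    -- (2) the first step with positive horizontal displacement is up-right, of width 1
    (∀ k, k + 1 < γ.length → 0 < (stepAt γ k).1 →
      (∀ j, j < k → (stepAt γ j).1 ≤ 0) →
      (stepAt γ k).1 = 1 ∧ 0 < (stepAt γ k).2) ∧
    -- (3) the multiset of down steps is {(0,-x₁),…,(0,-xₙ),(0,-d)}
    (downSteps γ =
      ((List.ofFn fun i => ((0 : ℤ), -(x i : ℤ))) : Multiset Pt) +
        {((0 : ℤ), -((∑ i, x i : ℕ) : ℤ))}) ∧
    -- (4) the up-right steps are (1, x_{I_a}) for a partition I₁,…,I_ℓ of {1,…,n}, and the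
    -- down steps (0,-xᵢ), i ∈ I_a, occur before the step (1, x_{I_a})
    (∃ (ℓ : ℕ) (I : Fin ℓ → Finset (Fin n)),
      (∀ a, (I a).Nonempty) ∧ (∀ a b, a ≠ b → Disjoint (I a) (I b)) ∧
      (∀ i, ∃ a, i ∈ I a) ∧
      upRightSteps γ =
        ((List.ofFn fun a => ((1 : ℤ), ∑ i ∈ I a, (x i : ℤ))) : Multiset Pt) ∧
      ∀ a, ∃ m, m + 1 < γ.length ∧ stepAt γ m = ((1 : ℤ), ∑ i ∈ I a, (x i : ℤ)) ∧
        ∀ i ∈ I a, ∃ j, j < m ∧ stepAt γ j = ((0 : ℤ), -(x i : ℤ))) ∧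
    -- (5) every remaining step equals (1,0)
    (∀ k, k + 1 < γ.length → ¬((stepAt γ k).1 = 0 ∧ (stepAt γ k).2 < 0) →
      ¬(0 < (stepAt γ k).1 ∧ 0 < (stepAt γ k).2) → stepAt γ k = ((1 : ℤ), 0)) := by
  set d : ℕ := ∑ i, x i with hd_def
  have hd : 0 < d := Finset.sum_pos (fun i _ => hx i) ⟨⟨0, hn⟩, Finset.mem_univ _⟩
  have hdZ : (0 : ℤ) < d := by exact_mod_cast hd
  have hinj : Function.Injective x := by
    intro i j hij
    by_contra hne
    refine hgen {i} {j} (by simpa using hne) (by simpa using hij)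
  obtain ⟨w, rfl⟩ := exists_pathFrom γ _ hγ.2.1
  have hok := oks_of_path c d w hγ
  rw [pathFrom_length] at hlen
  have hwlen : w.length = n + c + 1 := by omega
  have hplus : multPlusRect c d (Multiset.replicate c 1) {d} (pathFrom (0, (d : ℤ)) w) ≠ 0 :=
    left_ne_zero_of_mul hmult
  have hminus : multMinusRect c d {c} ((List.ofFn x : List ℕ) : Multiset ℕ)
      (pathFrom (0, (d : ℤ)) w) ≠ 0 := right_ne_zero_of_mul hmult
  -- the chain of `mult₊`
  obtain ⟨wp, ⟨s, t, hs, ht, hwp⟩, hchp⟩ := chain_of_multOf _ _ _ _ _ hplus hok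
  replace hwp := pathFrom_inj _ _ _ hwp
  have hs' : s = List.replicate c 1 := by
    rw [← Multiset.coe_replicate, Multiset.coe_eq_coe] at hs
    exact List.perm_replicate.1 hs
  have ht' : t = [d] := by
    rw [← Multiset.coe_singleton, Multiset.coe_eq_coe] at ht
    exact List.perm_singleton.1 ht
  have hPL : ∃ L : List (Pt × ℕ), L.map Prod.fst = w ∧ PL d L := by
    refine Relation.ReflTransGen.head_induction_on (motive := fun w _ =>
      ∃ L : List (Pt × ℕ), L.map Prod.fst = w ∧ PL d L) hchp ?_ ?_
    · rw [hwp, hs', ht']; exact PL_init c d hd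
    · intro a b hab _ ih; exact PL_back c d a b hab ih
  obtain ⟨L, hLw, hL⟩ := hPL
  -- the chain of `mult₋`
  obtain ⟨wm, ⟨s', t', hs1, ht1, hwm⟩, hchm⟩ := chain_of_multOf _ _ _ _ _ hminus hok
  replace hwm := pathFrom_inj _ _ _ hwm
  have ht1' : t' = [c] := by
    rw [← Multiset.coe_singleton, Multiset.coe_eq_coe] at ht1
    exact List.perm_singleton.1 ht1
  have hs1p : s'.Perm (List.ofFn x) := Multiset.coe_eq_coe.1 hs1
  rw [ht1', dSteps_eq, hSteps_eq] at hwm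
  simp only [List.map_cons, List.map_nil] at hwm
  have hcZ : (0 : ℤ) < c := by exact_mod_cast hc
  have hUU : UU c w := by
    refine Relation.ReflTransGen.head_induction_on (motive := fun w _ => UU c w) hchm ?_ ?_
    · refine ⟨_, _, [], hwm, ?_, hcZ, Or.inr rfl⟩
      intro a ha
      obtain ⟨i, -, rfl⟩ := List.mem_map.1 ha
      rfl
    · intro a b hab _ ih; exact UU_back c d a b hab ih
  have hDnle : Dn wm ≤ Dn w := by
    refine Relation.ReflTransGen.head_induction_on (motive := fun w _ => Dn wm ≤ Dn w) hchm le_rfl ?_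
    intro a b hab _ ih; exact ih.trans (Dn_back c d a b hab)
  have hDnwm : Dn wm = ((List.ofFn fun i => ((0 : ℤ), -(x i : ℤ))) : Multiset Pt) := by
    rw [hwm, Dn, ← Multiset.coe_add, Multiset.filter_add]
    have e1 : Multiset.filter (fun v : Pt => v.1 = 0 ∧ v.2 < 0)
        (([((c : ℤ), (0 : ℤ))] : List Pt) : Multiset Pt) = 0 := by
      simp
    have e2 : Multiset.filter (fun v : Pt => v.1 = 0 ∧ v.2 < 0)
        ((List.map (fun k : ℕ => ((0 : ℤ), -(k : ℤ))) s' : List Pt) : Multiset Pt) =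
        ((List.map (fun k : ℕ => ((0 : ℤ), -(k : ℤ))) s' : List Pt) : Multiset Pt) := by
      rw [Multiset.filter_eq_self]
      intro a ha
      obtain ⟨k, hk, rfl⟩ := List.mem_map.1 (Multiset.mem_coe.1 ha)
      obtain ⟨i, rfl⟩ := List.mem_ofFn.1 (hs1p.mem_iff.1 hk)
      have := hx i
      simp only [true_and]
      omega
    rw [e1, e2, add_zero, Multiset.coe_eq_coe]
    refine (hs1p.map _).trans ?_
    rw [List.map_ofFn]
    exact List.Perm.of_eq rfl
  -- basic facts on the steps of `w`
  have hnn : ∀ a ∈ w, 0 ≤ a.1 := by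
    intro a ha
    rcases hok.1 a ha with h | h <;> omega
  have hshape : ∀ a ∈ w, (a.1 = 0 ∧ a.2 < 0) ∨ (a.1 = 1 ∧ 0 ≤ a.2) := by
    intro a ha
    rw [← hLw] at ha
    obtain ⟨b, hb, rfl⟩ := List.mem_map.1 ha
    rcases hL.1 b hb with h | h
    · exact Or.inl h
    · obtain ⟨X, Y, hXY⟩ := List.append_of_mem hb
      exact Or.inr ⟨h, (PL_right d L X Y b hL hXY h).2.2.2.2⟩
  have hcard : (Dn w).card = n + 1 := by
    have h1 := Dn_card w (fun a ha => (hshape a ha).imp id (fun h => h.1))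
    rw [hok.2.2, hwlen] at h1
    push_cast at h1
    omega
  have hDeq := Dn_eq d hd L hL
  rw [hLw] at hDeq
  have hpos : ∃ b ∈ w, b.1 = 1 ∧ 0 < b.2 := by
    have hNl : (NN L).length = n := by
      have := congrArg Multiset.card hDeq
      rw [hcard] at this
      simpa using this.symm
    have hN0 : 0 < (NN L).length := by omega
    obtain ⟨a, ha⟩ := List.exists_mem_of_length_pos hN0
    have h1 := List.mem_filter.1 ha
    have h1' := h1.2
    simp only [decide_eq_true_eq] at h1'
    obtain ⟨b, hb, hb1, hb2, hb3⟩ := PL_down d L _ hL h1.1 h1'.1.2 h1'.2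
    exact ⟨b.1, hLw ▸ List.mem_map_of_mem hb, hb2, hb3⟩
  obtain ⟨b₀, hb₀, hb₀1, hb₀2⟩ := hpos
  have hc1 : c = 1 → ((1 : ℤ), (0 : ℤ)) ∉ w := by
    intro h1 hmem
    have h2 := two_rights w _ _ hnn hb₀ hmem (by rintro rfl; simp at hb₀2)
    rw [hok.2.2, hb₀1, h1] at h2
    simp at h2
  -- the last step
  have hlast : ∃ A, w = A ++ [((0 : ℤ), -(d : ℤ))] := by
    rcases List.eq_nil_or_concat L with rfl | ⟨X, a, hXa⟩
    · simp at hLw; subst hLw; simp at hwlen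
    have hwX : w = X.map Prod.fst ++ [a.1] := by rw [← hLw, hXa]; simp
    have haL : a ∈ L := by simp [hXa]
    have haw : a.1 ∈ w := by simp [hwX]
    rcases hshape a.1 haw with h | h
    · by_cases h0 : a.2 = 0
      · have : a ∈ L.filter (fun a => decide (a.2 = 0)) := List.mem_filter.2 ⟨haL, by simpa using h0⟩
        rw [hL.2.2.2, List.mem_singleton] at this
        exact ⟨X.map Prod.fst, by rw [hwX, this]⟩
      · exfalso
        obtain ⟨b, hb, hb1, hb2, hb3⟩ := PL_down d L a hL haL h.2 h0
        rw [hXa] at hb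
        simp only [List.concat_eq_append, List.mem_append, List.mem_singleton] at hb
        rcases hb with hb | rfl
        · have hp := hL.2.1
          rw [hXa, List.concat_eq_append, List.pairwise_append] at hp
          exact hp.2.2 b hb a (by simp) hb2 hb1
        · omega
    · exfalso
      have h1 := (hok.2.1 _ _ hwX).1
      have h2 := congrArg Prod.snd hok.2.2
      rw [hwX] at h2
      simp only [List.sum_append, List.sum_singleton, Prod.snd_add] at h2
      have h3 : a.1 = (1, 0) := Prod.ext h.1 (by simp only; linarith [h.2])
      have h4 : ∃ A, wm = A ++ [((1 : ℤ), (0 : ℤ))] := by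
        have key : ∀ w', Relation.ReflTransGen (St c d (fun x => x < 0)) w w' →
            ∃ A, w' = A ++ [((1 : ℤ), (0 : ℤ))] := by
          intro w' hw'
          induction hw' with
          | refl => exact ⟨X.map Prod.fst, by rw [hwX, h3]⟩
          | tail _ hst ih => exact last_fwd c d _ _ hst ih
        exact key wm hchm
      obtain ⟨A, hA⟩ := h4
      rw [hwm] at hA
      have h5 := congrArg List.getLast? hA
      simp at h5
      exact hc1 h5 (h3 ▸ haw)
  obtain ⟨A₀, hA₀⟩ := hlast
  -- the multiset of down steps
  have hDn : Dn w = ((List.ofFn fun i => ((0 : ℤ), -(x i : ℤ))) : Multiset Pt) +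
        {((0 : ℤ), -(d : ℤ))} := by
    rw [hDnwm] at hDnle
    obtain ⟨T, hT⟩ := Multiset.le_iff_exists_add.1 hDnle
    have hTc : T.card = 1 := by
      have := congrArg Multiset.card hT
      rw [hcard] at this
      simp at this
      omega
    obtain ⟨z, rfl⟩ := Multiset.card_eq_one.1 hTc
    have hDmem : ((0 : ℤ), -(d : ℤ)) ∈ Dn w := by rw [hDeq]; simp
    suffices hz : z = ((0 : ℤ), -(d : ℤ)) by rw [hT, hz]
    rw [hT, Multiset.mem_add, Multiset.mem_singleton] at hDmem
    rcases hDmem with h | h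
    · obtain ⟨i, hi⟩ := List.mem_ofFn.1 (Multiset.mem_coe.1 h)
      have hi' : x i = d := by
        have := congrArg Prod.snd hi
        simp at this
        exact this
      have huniq : ∀ j, j = i := by
        intro j
        by_contra hne
        have h1 : x i + x j ≤ ∑ k, x k := by
          rw [← Finset.sum_pair (fun e => hne e.symm)]
          exact Finset.sum_le_sum_of_subset (Finset.subset_univ _)
        have h2 := hx j
        omega
      have hn1 : n = 1 := by
        have h1 : Fintype.card (Fin n) ≤ 1 := Fintype.card_le_one_iff.2
          (fun a b => (huniq a).trans (huniq b).symm)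
        simp at h1
        omega
      have hs'd : s' = [d] := by
        subst hn1
        have h1 : List.ofFn x = [d] := by
          have h0 : x 0 = d := by rw [huniq 0]; exact hi'
          simp [List.ofFn_succ, h0]
        rw [h1] at hs1p
        exact List.perm_singleton.1 hs1p
      have hTT : TT d w := by
        refine Relation.ReflTransGen.head_induction_on (motive := fun w _ => TT d w) hchm ?_ ?_
        · exact ⟨[], [((c : ℤ), 0)], by rw [hwm, hs'd]; rfl, by simp⟩
        · intro a b hab _ ih; exact TT_back c d hd a b hab ih
      obtain ⟨A, B, hAB, hA⟩ := hTT
      have hDD : ({((0 : ℤ), -(d : ℤ)), ((0 : ℤ), -(d : ℤ))} : Multiset Pt) ≤ Dn w := by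
        rw [Dn, Multiset.le_filter]
        constructor
        · rcases List.eq_nil_or_concat B with rfl | ⟨B', y, rfl⟩
          · exfalso
            have h1 : Dn w = {((0 : ℤ), -(d : ℤ))} := by
              rw [hAB, Dn, ← Multiset.coe_add, Multiset.filter_add]
              have e1 : Multiset.filter (fun v : Pt => v.1 = 0 ∧ v.2 < 0) (A : Multiset Pt) = 0 := by
                rw [Multiset.filter_eq_nil]
                intro a ha h
                have := hA a (Multiset.mem_coe.1 ha)
                omega
              rw [e1]
              simp [Multiset.filter_singleton, hd]
            rw [h1] at hcard
            simp at hcard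
            omega
          · have hy : y = ((0 : ℤ), -(d : ℤ)) := by
              have h1 := congrArg List.getLast? (hA₀.symm.trans hAB)
              simp [List.getLast?_append, List.getLast?_cons] at h1
              exact h1.symm
            rw [hAB, hy]
            apply List.Sublist.subperm
            refine List.Sublist.trans ?_ (List.sublist_append_right A _)
            apply List.Sublist.cons_cons
            simp
        · intro a ha
          simp at ha
          subst ha
          simpa using hd
      have hof : ((List.ofFn fun i => ((0 : ℤ), -(x i : ℤ))) : Multiset Pt) =
          {((0 : ℤ), -(d : ℤ))} := by
        have h1 : ((List.ofFn fun i => ((0 : ℤ), -(x i : ℤ))) : Multiset Pt).card = 1 := by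
          simp [hn1]
        obtain ⟨y, hy⟩ := Multiset.card_eq_one.1 h1
        rw [hy, Multiset.mem_singleton] at h
        rw [hy, h]
      rw [hT, hof] at hDD
      have h1 : ({((0 : ℤ), -(d : ℤ)), ((0 : ℤ), -(d : ℤ))} : Multiset Pt) =
          {((0 : ℤ), -(d : ℤ))} + {((0 : ℤ), -(d : ℤ))} := rfl
      rw [h1] at hDD
      have h2 := Multiset.le_of_add_le_add_left hDD
      have h3 := Multiset.singleton_le.1 h2
      exact (Multiset.mem_singleton.1 h3).symm
    · exact h.symm
  have hkw : ∀ k, k + 1 < (pathFrom (0, (d : ℤ)) w).length → k < w.length := by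
    intro k hk
    rw [pathFrom_length] at hk
    omega
  refine ⟨⟨?_, ?_⟩, ?_, ?_, ?_, ?_⟩
  · have h1 := pt_pathFrom (0, (d : ℤ)) A₀ [((0 : ℤ), -(d : ℤ))]
    have hl : A₀.length = n + c := by
      have := congrArg List.length hA₀
      rw [hwlen] at this
      simp at this
      omega
    rw [← hA₀, hl] at h1
    rw [h1]
    have h2 := hok.2.2
    rw [hA₀] at h2
    have h3 := congrArg Prod.fst h2
    have h4 := congrArg Prod.snd h2
    simp only [List.sum_append, List.sum_singleton, Prod.fst_add, Prod.snd_add] at h3 h4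
    exact Prod.ext (by simp only [Prod.fst_add]; linarith) (by simp only [Prod.snd_add]; linarith)
  · have h1 := pt_pathFrom (0, (d : ℤ)) w []
    rw [List.append_nil, hwlen, hok.2.2] at h1
    rw [h1]
    simp
  · intro k hk hk1 hkj
    have hkl := hkw k hk
    rw [stepAt_getElem _ _ _ hkl] at hk1 ⊢
    obtain ⟨A, f, B, hAB, hA, hf, hf'⟩ := hUU
    have hkA : k = A.length := by
      rcases lt_trichotomy k A.length with h | h | h
      · exfalso
        have e : w[k] = A[k] := by
          simp only [hAB]
          exact List.getElem_append_left h
        have := hA A[k] (List.getElem_mem _)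
        rw [e] at hk1
        omega
      · exact h
      · exfalso
        have h1 := hkj A.length h
        rw [hAB, stepAt_pathFrom] at h1
        omega
    have e : w[k] = f := by
      subst hkA
      simp [hAB]
    rw [e]
    have hfw : f ∈ w := by simp [hAB]
    rcases hf' with h | h
    · rcases hshape f hfw with h' | h'
      · omega
      · exact ⟨h'.1, h⟩
    · exfalso
      rcases hshape f hfw with h' | h'
      · omega
      · have h1 : c = 1 := by
          have := h'.1
          rw [h] at this
          simpa using this
        apply hc1 h1
        rw [h, h1] at hfw
        simpa using hfw
  · rw [downSteps, steps_pathFrom]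
    exact hDn
  · rw [← hLw] at hDn
    obtain ⟨ℓ, I, h1, h2, h3, h4, h5⟩ := core n d hd x hx hinj L hL hDn
    refine ⟨ℓ, I, h1, h2, h3, ?_, ?_⟩
    · rw [upRightSteps, steps_pathFrom, ← h4, hLw]
    · intro a
      obtain ⟨X, Y, hXY, hX⟩ := h5 a
      rw [hLw] at hXY
      refine ⟨X.length, ?_, ?_, ?_⟩
      · rw [pathFrom_length, hXY]; simp
      · rw [hXY, stepAt_pathFrom]
      · intro i hi
        obtain ⟨X1, X2, hX12⟩ := List.append_of_mem (hX i hi)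
        refine ⟨X1.length, ?_, ?_⟩
        · rw [hX12]; simp
        · rw [hXY, hX12, List.append_assoc, List.cons_append, stepAt_pathFrom]
  · intro k hk h1 h2
    have hkl := hkw k hk
    rw [stepAt_getElem _ _ _ hkl] at h1 h2 ⊢
    rcases hshape _ (List.getElem_mem hkl) with h | h
    · exact absurd h h1
    · refine Prod.ext h.1 ?_
      simp only
      have := h.2
      by_contra hne
      exact h2 ⟨by omega, by omega⟩

end TropPaths
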